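/- Let x ∈ O(m,n) be nondegenerate and not lying in A, with rank r and level ℓ, and suppose x does NOT satisfy (†). Then w := x̌σ_ℓ + x̄σ_{ℓ−1} is a nondegenerate element of O(m+1,n) not lying in A, with rank(w) = r+1 and level(w) = ℓ; w satisfies (†); and w∂_ℓ = x. Moreover supp(w) = {α∘σ_ℓ : α ∈ supp(x̌)} ∪ {α∘σ_{ℓ−1} : α ∈ supp(x̄)}. -/

import Mathlib

/-!
The parts of `w = x̌σ_ℓ + x̄σ_{ℓ-1}` are separated by the value at `r + 1`: operators in the first
part stay below `n` there, those in the second part equal `n`. This determines the support of `w`,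
its rank and its level, and a degeneracy of `w` at `k` (tested on the support, `isDegenAt_iff`)
yields a degeneracy of `x`, a smaller level, or condition (†) for `x`, provided `ℓ ≥ 1`.

Positivity of `(wβ)_γ`: if `β` omits `ℓ`, then it factors through `∂_ℓ`, and `w∂_ℓ = x`. If `β` hits
`ℓ`, both parts contribute nonnegatively. For `x̄` all of (O2) holds (`Pos.top`), because the
condition `α r = n` can be encoded by adding the vertex `r ↦ n`. For `x̌` it holds for faces meeting
`[ℓ, r]` (`Pos.checkPart_nonneg`), because operators in its support are constant on `[ℓ, r]`, so a
vertex there can be moved to `r`.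

The inequality `ℓ ≥ 1` is `level_pos`. The vertex `r` of `x` is a single vertex of `[n]`, so one of
`x̄`, `x̌` has coefficient sum zero. If `ℓ = 0` both satisfy (O2), and an element satisfying (O2) with
sum zero vanishes (`Pos.eq_zero`). But `x̄ ≠ 0` by definition of the rank and `x̌ ≠ 0` since `x` is
not in `A`.
-/

abbrev ZD (a b : ℕ) := (Fin a →o Fin b) →₀ ℤ

noncomputable def act {a b c : ℕ} (x : ZD b c) (β : Fin a →o Fin b) : ZD a c :=
  Finsupp.mapDomain (fun α => α.comp β) x

def face {m : ℕ} (i : Fin (m+1)) : Fin m →o Fin (m+1) :=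
  ⟨i.succAbove, (Fin.succAboveOrderEmb i).monotone⟩

def degen {m : ℕ} (i : Fin m) : Fin (m+1) →o Fin m :=
  ⟨i.predAbove, Fin.predAbove_right_monotone i⟩

def memO {a b : ℕ} (x : ZD a b) : Prop :=
  (x.sum fun _ c => c) = 1 ∧
    ∀ (p : ℕ) (β : Fin (p+1) →o Fin a) (γ : Fin (p+1) →o Fin b),
      Function.Injective ⇑β → Function.Injective ⇑γ → 0 ≤ act x β γ

/-- The witness operation `x ▽ₖ y`, for `x, y ∈ ℤΔ([m],[n])` and `1 ≤ k ≤ m`. -/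
noncomputable def fill {m b : ℕ} (k : ℕ) (h1 : 1 ≤ k) (h2 : k ≤ m)
    (x y : ZD (m+1) b) : ZD (m+2) b :=
  act x (degen ⟨k, by omega⟩)
    - act (act (act x (face ⟨k-1, by omega⟩)) (degen ⟨k-1, by omega⟩)) (degen ⟨k-1, by omega⟩)
    + act y (degen ⟨k-1, by omega⟩)

/-- The pasting operation `x ⋆ₖ y`. -/
noncomputable def paste {m b : ℕ} (k : ℕ) (h1 : 1 ≤ k) (h2 : k ≤ m)
    (x y : ZD (m+1) b) : ZD (m+1) b :=
  x - act (act x (face ⟨k-1, by omega⟩)) (degen ⟨k-1, by omega⟩) + y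

/-- `x` is degenerate at `k`, i.e. `x = y σₖ` for some `y` one dimension lower. -/
def isDegenAt {a b : ℕ} (x : ZD a b) (k : ℕ) : Prop :=
  ∃ (p : ℕ) (hp : a = p + 1) (hk : k < p) (y : ZD p b),
    x = hp ▸ act y (degen ⟨k, hk⟩)

def isDegen {a b : ℕ} (x : ZD a b) : Prop := ∃ k, isDegenAt x k

/-- The number of preimages of the top element `n` under `α`. -/
def npre {a n : ℕ} (α : Fin a →o Fin (n+1)) : ℕ :=
  (Finset.univ.filter fun i => α i = Fin.last n).card

/-- `x` lies in the simplicial subset `A`: all operators in the support of `x`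
have equally many preimages of the top element. -/
def inA {a n : ℕ} (x : ZD a (n+1)) : Prop :=
  ∀ α ∈ x.support, ∀ β ∈ x.support, npre α = npre β

/-- `r` is the rank of `x`: the least `i` such that some `α ∈ supp x` has `α i = n`. -/
def isRank {a n : ℕ} (x : ZD a (n+1)) (r : Fin a) : Prop :=
  IsLeast {i : Fin a | ∃ α ∈ x.support, α i = Fin.last n} r

/-- `x̌`: the part of `x` supported on operators with `α r < n`. -/
noncomputable def checkPart {a n : ℕ} (x : ZD a (n+1)) (r : Fin a) : ZD a (n+1) :=
  x.filter (fun α => ¬ (α r = Fin.last n))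

/-- `x̄`: the part of `x` supported on operators with `α r = n`. -/
noncomputable def barPart {a n : ℕ} (x : ZD a (n+1)) (r : Fin a) : ZD a (n+1) :=
  x.filter (fun α => α r = Fin.last n)

/-- `ℓ` is the level of `x` (with rank `r`). -/
def isLevel {a n : ℕ} (x : ZD a (n+1)) (r ℓ : Fin a) : Prop :=
  IsLeast {i : Fin a | ∀ α ∈ (checkPart x r).support, α i = α r} ℓ

/-- Condition (†): `x̄` is degenerate at `ℓ - 1`. -/
def dagger {a n : ℕ} (x : ZD a (n+1)) (r ℓ : Fin a) : Prop :=
  isDegenAt (barPart x r) ((ℓ : ℕ) - 1)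

/-- The corank of `x`: the greatest number of preimages of `n` among operators in `supp x`. -/
def corank {a n : ℕ} (x : ZD a (n+1)) : ℕ := x.support.sup npre

/-- `u = x̌ + (x̄ ∂ℓ) σ(ℓ-1)`. -/
noncomputable def uPart {m n : ℕ} (x : ZD (m+1) (n+1)) (r ℓ : Fin (m+1))
    (h1 : 1 ≤ (ℓ : ℕ)) : ZD (m+1) (n+1) :=
  checkPart x r
    + act (act (barPart x r) (face ℓ)) (degen ⟨(ℓ:ℕ)-1, by have := ℓ.isLt; omega⟩)

/-- `v = (x̌ ∂(ℓ-1)) σ(ℓ-1) + x̄`. -/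
noncomputable def vPart {m n : ℕ} (x : ZD (m+1) (n+1)) (r ℓ : Fin (m+1))
    (h1 : 1 ≤ (ℓ : ℕ)) : ZD (m+1) (n+1) :=
  act (act (checkPart x r) (face ⟨(ℓ:ℕ)-1, by have := ℓ.isLt; omega⟩))
      (degen ⟨(ℓ:ℕ)-1, by have := ℓ.isLt; omega⟩)
    + barPart x r

/-- The parent `w = x̌ σℓ + x̄ σ(ℓ-1)`. -/
noncomputable def parent {m n : ℕ} (x : ZD (m+1) (n+1)) (r ℓ : Fin (m+1)) :
    ZD (m+2) (n+1) :=
  act (checkPart x r) (degen ℓ)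
    + act (barPart x r) (degen ⟨(ℓ:ℕ)-1, by have := ℓ.isLt; omega⟩)

/-- Bilinear extension of composition: `(x ∘ y)_γ = Σ_{α∘β = γ} x_α · y_β`. -/
noncomputable def zcomp {p m n : ℕ} (x : ZD m n) (y : ZD p m) : ZD p n :=
  x.sum fun α c => c • Finsupp.mapDomain (fun β => α.comp β) y

/-! ### Simplicial operators and their action -/

theorem degen_val {m : ℕ} (i : Fin m) (j : Fin (m+1)) :
    (degen i j : ℕ) = if (j:ℕ) ≤ i then (j:ℕ) else j - 1 := by
  change ((i.predAbove j : Fin m) : ℕ) = _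
  rcases le_or_gt j i.castSucc with h | h
  · rw [Fin.predAbove_of_le_castSucc _ _ h, if_pos (by simpa [Fin.le_def] using h)]; simp
  · rw [Fin.predAbove_of_castSucc_lt _ _ h, if_neg (by simpa [Fin.lt_def] using h)]; simp

theorem face_val {m : ℕ} (i : Fin (m+1)) (j : Fin m) :
    (face i j : ℕ) = if (j:ℕ) < i then (j:ℕ) else j + 1 := by
  change ((i.succAbove j : Fin (m+1)) : ℕ) = _
  simp only [Fin.succAbove, Fin.lt_def, Fin.val_castSucc]
  split_ifs <;> simp

theorem degen_face_self {m : ℕ} (i : Fin m) (j : Fin m) :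
    degen i (face i.castSucc j) = j := by
  ext
  rw [degen_val, face_val]
  simp only [Fin.val_castSucc]
  split_ifs <;> omega

theorem degen_surjective {m : ℕ} (i : Fin m) : Function.Surjective (degen i) :=
  fun j => ⟨_, degen_face_self i j⟩

theorem act_act {a b c d : ℕ} (x : ZD c d) (β : Fin b →o Fin c) (δ : Fin a →o Fin b) :
    act (act x β) δ = act x (β.comp δ) := by
  unfold act
  rw [← Finsupp.mapDomain_comp]
  rfl

theorem act_add {a b c : ℕ} (x y : ZD b c) (β : Fin a →o Fin b) :
    act (x + y) β = act x β + act y β := Finsupp.mapDomain_add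

theorem act_eq_self {a b : ℕ} (x : ZD a b) (β : Fin a →o Fin a)
    (h : ∀ α ∈ x.support, α.comp β = α) : act x β = x := by
  unfold act
  rw [Finsupp.mapDomain_congr (g := id) (fun α hα => h α hα), Finsupp.mapDomain_id]

theorem act_apply {a b c : ℕ} (x : ZD b c) (β : Fin a →o Fin b) (γ : Fin a →o Fin c) :
    act x β γ = ∑ α ∈ x.support, if α.comp β = γ then x α else 0 := by
  unfold act Finsupp.mapDomain
  rw [Finsupp.sum_apply]
  unfold Finsupp.sum
  refine Finset.sum_congr rfl fun α _ => ?_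
  exact Finsupp.single_apply

theorem act_filter_apply {a b c : ℕ} (x : ZD b c) (P : (Fin b →o Fin c) → Prop)
    [DecidablePred P] (β : Fin a →o Fin b) (γ : Fin a →o Fin c) :
    act (x.filter P) β γ
      = ∑ α ∈ x.support, if P α ∧ α.comp β = γ then x α else 0 := by
  rw [act_apply, Finsupp.support_filter, Finset.sum_filter]
  refine Finset.sum_congr rfl fun α _ => ?_
  by_cases h : P α <;> simp [h]

/-- If the conditions `α ∈ P, αβ = γ` and `αβ' = γ'` agree on the support, then the corresponding
coefficients agree. -/
theorem act_filter_eq {a a' b c : ℕ} (x : ZD b c) (P : (Fin b →o Fin c) → Prop)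
    [DecidablePred P] (β : Fin a →o Fin b) (γ : Fin a →o Fin c)
    (β' : Fin a' →o Fin b) (γ' : Fin a' →o Fin c)
    (h : ∀ α ∈ x.support, (P α ∧ α.comp β = γ) ↔ α.comp β' = γ') :
    act (x.filter P) β γ = act x β' γ' := by
  rw [act_filter_apply, act_apply]
  exact Finset.sum_congr rfl fun α hα => by simp only [h α hα]

theorem act_filter_eq_zero {a b c : ℕ} (x : ZD b c) (P : (Fin b →o Fin c) → Prop)
    [DecidablePred P] (β : Fin a →o Fin b) (γ : Fin a →o Fin c)
    (h : ∀ α ∈ x.support, P α → α.comp β ≠ γ) :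
    act (x.filter P) β γ = 0 := by
  rw [act_filter_apply]
  exact Finset.sum_eq_zero fun α hα => if_neg fun h' => h α hα h'.1 h'.2

theorem sum_act {a b c : ℕ} (x : ZD b c) (β : Fin a →o Fin b) :
    ((act x β).sum fun _ c => c) = x.sum fun _ c => c :=
  Finsupp.sum_mapDomain_index (fun _ => rfl) (fun _ _ _ => rfl)

theorem sum_filter_eq_act {a b c : ℕ} (x : ZD b c) (P : (Fin b →o Fin c) → Prop)
    [DecidablePred P] (β : Fin a →o Fin b) (γ : Fin a →o Fin c)
    (h : ∀ α ∈ x.support, P α ↔ α.comp β = γ) :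
    ((x.filter P).sum fun _ c => c) = act x β γ := by
  rw [act_apply, Finsupp.sum, Finsupp.support_filter, Finset.sum_filter]
  refine Finset.sum_congr rfl fun α hα => ?_
  simp only [← h α hα]
  by_cases h : P α <;> simp [h]

theorem support_act {a b c : ℕ} (x : ZD b c) (β : Fin a →o Fin b)
    (hβ : Set.InjOn (fun α : Fin b →o Fin c => α.comp β) ↑x.support) :
    (act x β).support = x.support.image fun α => α.comp β :=
  Finsupp.mapDomain_support_of_injOn x hβ

theorem exists_of_mem_support_act {a b c : ℕ} {x : ZD b c} {β : Fin a →o Fin b}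
    {γ : Fin a →o Fin c} (h : γ ∈ (act x β).support) : ∃ α ∈ x.support, α.comp β = γ := by
  classical
  simpa using Finsupp.mapDomain_support h

theorem comp_degen_injective {m c : ℕ} (i : Fin m) :
    Function.Injective fun α : Fin m →o Fin c => α.comp (degen i) := by
  intro α α' h
  ext j : 2
  obtain ⟨k, rfl⟩ := degen_surjective i j
  exact DFunLike.congr_fun h k

/-- An element is degenerate at `k` exactly when every operator in its support is. -/
theorem isDegenAt_iff {a b : ℕ} (x : ZD a b) (k : ℕ) :
    isDegenAt x k ↔ ∃ h : k + 1 < a, ∀ α ∈ x.support, α ⟨k, by omega⟩ = α ⟨k+1, h⟩ := by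
  constructor
  · rintro ⟨p, rfl, hk, y, rfl⟩
    refine ⟨by omega, fun α hα => ?_⟩
    obtain ⟨α', -, rfl⟩ := exists_of_mem_support_act hα
    change α' _ = α' _
    congr 1
    ext
    simp [degen_val]
  · rintro ⟨h, hx⟩
    obtain ⟨p, rfl⟩ : ∃ p, a = p + 1 := ⟨a - 1, by omega⟩
    refine ⟨p, rfl, by omega, act x (face ⟨k, by omega⟩), ?_⟩
    simp only
    rw [act_act, act_eq_self]
    intro α hα
    ext j : 2
    change α _ = α j
    rcases eq_or_ne (j : ℕ) k with hj | hj
    · have e1 : j = ⟨k, by omega⟩ := Fin.ext hj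
      conv_rhs => rw [e1, hx α hα]
      congr 1
      ext
      simp [degen_val, face_val, hj]
    · congr 1
      ext
      change ((face _ (degen _ j) : Fin (p+1)) : ℕ) = j
      rw [face_val, degen_val]
      simp only
      split_ifs <;> omega

/-! ### Condition (O2) -/

/-- Condition (O2): coefficients of nondegenerate simplices in nondegenerate faces are
nonnegative. -/
def Pos {a b : ℕ} (x : ZD a b) : Prop :=
  ∀ (p : ℕ) (β : Fin (p+1) →o Fin a) (γ : Fin (p+1) →o Fin b),
    Function.Injective ⇑β → Function.Injective ⇑γ → 0 ≤ act x β γ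

theorem act_eq_zero_of_not_injective {a b c : ℕ} (x : ZD b c) (β : Fin a →o Fin b)
    (γ : Fin a →o Fin c) (hβ : ¬ Function.Injective β) (hγ : Function.Injective γ) :
    act x β γ = 0 := by
  rw [act_apply]
  refine Finset.sum_eq_zero fun α _ => if_neg ?_
  rintro rfl
  exact hβ (Function.Injective.of_comp (f := α) hγ)

theorem Pos.act_nonneg {p b c : ℕ} {x : ZD b c} (hx : Pos x) (β : Fin (p+1) →o Fin b)
    (γ : Fin (p+1) →o Fin c) (hγ : Function.Injective γ) : 0 ≤ act x β γ := by
  by_cases hβ : Function.Injective β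
  · exact hx p β γ hβ hγ
  · exact (act_eq_zero_of_not_injective x β γ hβ hγ).ge

theorem Pos.pullback {a b c : ℕ} {x : ZD b c} (hx : Pos x) (β : Fin a →o Fin b) : Pos (act x β) := by
  intro p δ γ _ hγ
  rw [act_act]
  exact hx.act_nonneg _ _ hγ

/-- The inclusion of the vertex `i`. -/
def pt {a : ℕ} (i : Fin a) : Fin (0+1) →o Fin a := ⟨fun _ => i, fun _ _ _ => le_rfl⟩

theorem pt_injective {a : ℕ} (i : Fin a) : Function.Injective (pt i) :=
  fun _ _ _ => Subsingleton.elim (α := Fin 1) _ _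

theorem pt_lt {a : ℕ} {i k : Fin a} (h : i < k) : ∀ j, pt i j < k := fun _ => h

theorem comp_pt_eq_iff {a b : ℕ} (α : Fin a →o Fin b) (i : Fin a) (j : Fin b) :
    α.comp (pt i) = pt j ↔ α i = j :=
  ⟨fun h => DFunLike.congr_fun h 0, fun h => by ext _ : 2; exact h⟩

theorem Pos.vertex_le_sum {a b : ℕ} {x : ZD a b} (hx : Pos x) (i : Fin a) (j : Fin b) :
    act x (pt i) (pt j) ≤ x.sum fun _ c => c := by
  rw [← sum_act x (pt i), Finsupp.sum]
  have h0 : ∀ γ, 0 ≤ act x (pt i) γ := fun γ =>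
    hx 0 _ γ (pt_injective i) fun _ _ _ => Subsingleton.elim (α := Fin 1) _ _
  by_cases h : pt j ∈ (act x (pt i)).support
  · exact Finset.single_le_sum (f := act x (pt i)) (fun γ _ => h0 γ) h
  · rw [Finsupp.notMem_support_iff.1 h]
    exact Finset.sum_nonneg fun γ _ => h0 γ

/-- `β` with the value at `k` replaced by `r`, when this stays monotone. -/
def replaceAt {p a : ℕ} (β : Fin p →o Fin a) (k : Fin p) (r : Fin a)
    (hlt : ∀ j < k, β j < r) (hgt : ∀ j, k < j → r < β j) : Fin p →o Fin a where
  toFun := Function.update β k r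
  monotone' := by
    intro i j hij
    rcases eq_or_ne i k with rfl | hi <;> rcases eq_or_ne j i with rfl | hj
    · exact le_rfl
    · rw [Function.update_self, Function.update_of_ne hj]
      exact (hgt j (lt_of_le_of_ne hij hj.symm)).le
    · exact le_rfl
    · rw [Function.update_of_ne hi]
      rcases eq_or_ne j k with rfl | hj'
      · rw [Function.update_self]
        exact (hlt i (lt_of_le_of_ne hij hi)).le
      · rw [Function.update_of_ne hj']
        exact β.monotone hij

@[simp]
theorem replaceAt_self {p a : ℕ} (β : Fin p →o Fin a) (k : Fin p) (r : Fin a)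
    (hlt : ∀ j < k, β j < r) (hgt : ∀ j, k < j → r < β j) : replaceAt β k r hlt hgt k = r :=
  Function.update_self (β := fun _ => Fin a) k r β

theorem replaceAt_of_ne {p a : ℕ} (β : Fin p →o Fin a) (k : Fin p) (r : Fin a)
    (hlt : ∀ j < k, β j < r) (hgt : ∀ j, k < j → r < β j) {j : Fin p} (hj : j ≠ k) :
    replaceAt β k r hlt hgt j = β j :=
  Function.update_of_ne (β := fun _ => Fin a) hj r β

/-- `β` followed by a new last value `r`. -/
def append {p a : ℕ} (β : Fin (p+1) →o Fin a) (r : Fin a) (h : ∀ j, β j < r) :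
    Fin (p+2) →o Fin a where
  toFun := Fin.snoc (α := fun _ => Fin a) β r
  monotone' := by
    intro i j hij
    induction j using Fin.lastCases with
    | last =>
      induction i using Fin.lastCases with
      | last => exact le_rfl
      | cast i => simpa using (h i).le
    | cast j =>
      induction i using Fin.lastCases with
      | last => exact absurd hij (not_le.2 (Fin.castSucc_lt_last j))
      | cast i => simpa using β.monotone (by simpa using hij)

@[simp]
theorem append_last {p a : ℕ} (β : Fin (p+1) →o Fin a) (r : Fin a) (h : ∀ j, β j < r) :
    append β r h (Fin.last (p+1)) = r :=
  Fin.snoc_last (α := fun _ => Fin a) r β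

@[simp]
theorem append_castSucc {p a : ℕ} (β : Fin (p+1) →o Fin a) (r : Fin a) (h : ∀ j, β j < r)
    (j : Fin (p+1)) : append β r h j.castSucc = β j :=
  Fin.snoc_castSucc (α := fun _ => Fin a) r β j

theorem append_injective {p a : ℕ} (β : Fin (p+1) →o Fin a) (r : Fin a) (h : ∀ j, β j < r)
    (hβ : Function.Injective β) : Function.Injective (append β r h) := by
  intro i j hij
  induction j using Fin.lastCases with
  | last =>
    induction i using Fin.lastCases with
    | last => rfl
    | cast i => exact absurd (by simpa using hij) (h i).ne
  | cast j =>
    induction i using Fin.lastCases with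
    | last => exact absurd (by simpa using hij.symm) (h j).ne
    | cast i => exact congrArg _ (hβ (by simpa using hij))

theorem comp_append_eq_iff {p a b : ℕ} (α : Fin a →o Fin b) (β : Fin (p+1) →o Fin a) (r : Fin a)
    (h : ∀ j, β j < r) (γ : Fin (p+1) →o Fin b) (N : Fin b) (h' : ∀ j, γ j < N) :
    α.comp (append β r h) = append γ N h' ↔ α r = N ∧ α.comp β = γ := by
  constructor
  · intro e
    refine ⟨by simpa using DFunLike.congr_fun e (Fin.last _), ?_⟩
    ext j : 2
    simpa using DFunLike.congr_fun e j.castSucc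
  · rintro ⟨h1, rfl⟩
    ext j : 2
    induction j using Fin.lastCases with
    | last => simpa using h1
    | cast i => simp

/-- If `N` bounds all values on the support and is not attained before `r`, the part of `x` with
`α r = N` inherits (O2): a coefficient of it is the coefficient of `x` at the simplex in which `r`
is appended to, or replaces the last vertex of, the given one. -/
theorem Pos.top {a b : ℕ} {x : ZD a b} (hx : Pos x) (r : Fin a) (N : Fin b)
    (hN : ∀ α ∈ x.support, ∀ i, α i ≤ N) (hr : ∀ α ∈ x.support, ∀ i < r, α i ≠ N) :
    Pos (x.filter fun α => α r = N) := by
  intro p β γ hβ hγ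
  have hlast : ∀ α ∈ x.support, α r = N → ∀ i, r ≤ i → α i = N := fun α hα h i hi =>
    le_antisymm (hN α hα i) (h ▸ α.monotone hi)
  by_cases h1 : ∀ j, β j < r
  · by_cases h2 : ∀ j, γ j < N
    · rw [act_filter_eq x _ β γ (append β r h1) (append γ N h2)
        fun α _ => (comp_append_eq_iff α β r h1 γ N h2).symm]
      exact hx _ _ _ (append_injective _ _ _ hβ) (append_injective _ _ _ hγ)
    · push Not at h2
      obtain ⟨j, hj⟩ := h2
      refine (act_filter_eq_zero x _ β γ fun α hα _ e => ?_).ge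
      rw [← e] at hj
      exact hr α hα (β j) (h1 j) (le_antisymm (hN α hα _) hj)
  · by_cases h2 : ∀ j < Fin.last p, β j < r
    · have h3 : r ≤ β (Fin.last p) := by
        push Not at h1
        obtain ⟨j, hj⟩ := h1
        exact hj.trans (β.monotone (Fin.le_last j))
      by_cases h4 : γ (Fin.last p) = N
      · rw [act_filter_eq x _ β γ
          (replaceAt β (Fin.last p) r h2 fun j hj => absurd hj (not_lt.2 (Fin.le_last j))) γ]
        · exact hx.act_nonneg _ _ hγ
        · intro α hα
          constructor
          · rintro ⟨e1, rfl⟩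
            ext j : 2
            rcases eq_or_ne j (Fin.last p) with rfl | hj
            · simp [e1, hlast α hα e1 _ h3]
            · simp [replaceAt_of_ne _ _ _ _ _ hj]
          · intro e
            have e1 : α r = N := by
              rw [← h4, ← e]; simp 
            refine ⟨e1, ?_⟩
            ext j : 2
            rcases eq_or_ne j (Fin.last p) with rfl | hj
            · simp [h4, hlast α hα e1 _ h3]
            · rw [← e]; simp [replaceAt_of_ne _ _ _ _ _ hj]
      · refine (act_filter_eq_zero x _ β γ fun α hα e1 e => h4 ?_).ge
        rw [← e]
        exact hlast α hα e1 _ h3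
    · push Not at h2
      obtain ⟨j, hj, hj'⟩ := h2
      refine (act_filter_eq_zero x _ β γ fun α hα e1 e => hj.ne (hγ ?_)).ge
      rw [← e]
      exact (hlast α hα e1 _ hj').trans
        (hlast α hα e1 _ (hj'.trans (β.monotone hj.le))).symm

/-- An element satisfying (O2) with coefficient sum zero vanishes. Induction on a strict upper
bound `N + 1` of the values: the part attaining `N` first again satisfies (O2) with sum zero, and
it is determined by its restriction to the indices where its values are smaller than `N`. -/
theorem Pos.eq_zero_aux {a b : ℕ} (N : ℕ) : ∀ x : ZD a b, Pos x → (x.sum fun _ c => c) = 0 →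
    (∀ α ∈ x.support, ∀ i, (α i : ℕ) < N) → 0 < a → x = 0 := by
  induction N with
  | zero =>
    intro x _ _ h ha
    rw [← Finsupp.support_eq_empty, Finset.eq_empty_iff_forall_notMem]
    exact fun α hα => Nat.not_lt_zero _ (h α hα ⟨0, ha⟩)
  | succ N ih =>
    intro x hx hs h ha
    by_cases hatt : ∀ α ∈ x.support, ∀ i, (α i : ℕ) ≠ N
    · exact ih x hx hs
        (fun α hα i => lt_of_le_of_ne (Nat.lt_succ_iff.1 (h α hα i)) (hatt α hα i)) ha
    exfalso
    push Not at hatt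
    obtain ⟨α₀, hα₀, i₀, hi₀⟩ := hatt
    obtain ⟨T, hT⟩ : ∃ T : Fin b, (T : ℕ) = N := ⟨_, hi₀⟩
    obtain ⟨r, ⟨α₁, hα₁, hr₁⟩, hrmin⟩ : ∃ r : Fin a, (∃ α ∈ x.support, α r = T) ∧
        ∀ i < r, ∀ α ∈ x.support, α i ≠ T := by
      have hne : ∃ i : Fin a, ∃ α ∈ x.support, α i = T := ⟨i₀, α₀, hα₀, Fin.ext (by omega)⟩
      obtain ⟨r, hr, hmin⟩ := WellFounded.has_min (wellFounded_lt (α := Fin a))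
        {i | ∃ α ∈ x.support, α i = T} hne
      exact ⟨r, hr, fun i hi α hα e => hmin i ⟨α, hα, e⟩ hi⟩
    have hle : ∀ α ∈ x.support, ∀ i, α i ≤ T := fun α hα i => by
      have := h α hα i
      rw [Fin.le_def]; omega
    set y := x.filter fun α => α r = T with hy
    have hymem : ∀ α, α ∈ y.support ↔ α ∈ x.support ∧ α r = T := fun α => by
      rw [hy, Finsupp.support_filter, Finset.mem_filter]
    have hypos : Pos y := hx.top r T hle fun α hα i hi => hrmin i hi α hα
    have hysum : (y.sum fun _ c => c) = 0 := by
      rw [hy, sum_filter_eq_act x _ (pt r) (pt T) fun α _ => (comp_pt_eq_iff α r T).symm]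
      refine le_antisymm (hs ▸ hx.vertex_le_sum r T) (hx 0 _ _ (pt_injective _) (pt_injective _))
    have hyge : ∀ α ∈ y.support, ∀ i, r ≤ i → α i = T := fun α hα i hi =>
      le_antisymm (hle α ((hymem α).1 hα).1 i) (((hymem α).1 hα).2 ▸ α.monotone hi)
    have hy1 : α₁ ∈ y.support := (hymem _).2 ⟨hα₁, hr₁⟩
    rcases Nat.eq_zero_or_pos (r : ℕ) with hr0 | hr0
    -- all operators in `supp y` are constant at `T`
    · have hysub : ∀ α ∈ y.support, α = α₁ := fun α hα => by
        ext i : 2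
        have hi : r ≤ i := by rw [Fin.le_def]; omega
        rw [hyge α hα i hi, hyge α₁ hy1 i hi]
      have : (y.sum fun _ c => c) = y α₁ := by
        rw [Finsupp.sum, Finset.eq_singleton_iff_unique_mem.2 ⟨hy1, hysub⟩, Finset.sum_singleton]
      exact Finsupp.mem_support_iff.1 hy1 (this.symm.trans hysum)
    -- `τ` collapses the indices from `r` on to `r - 1`
    · let q : Fin a := ⟨(r:ℕ) - 1, by omega⟩
      have hqr : q < r := by rw [Fin.lt_def]; change (r:ℕ) - 1 < r; omega
      let τ : Fin a →o Fin a := ⟨fun i => min i q, fun i j hij => min_le_min_right q hij⟩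
      have hz : act y τ = 0 := by
        refine ih _ (hypos.pullback τ) ((sum_act y τ).trans hysum) ?_ ha
        intro γ hγ i
        obtain ⟨α, hα, rfl⟩ := exists_of_mem_support_act hγ
        have hα' := ((hymem α).1 hα).1
        have h1 : α (min i q) ≠ T := hrmin _ (lt_of_le_of_lt (min_le_right _ _) hqr) α hα'
        have h2 : α (min i q) < T := lt_of_le_of_ne (hle α hα' _) h1
        rw [← hT]
        exact h2
      have hinj : Set.InjOn (fun α : Fin a →o Fin b => α.comp τ) ↑y.support := by
        intro α hα α' hα' e
        ext i : 2
        rcases lt_or_ge i r with hi | hi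
        · have hiq : min i q = i := min_eq_left (by
            rw [Fin.lt_def] at hi; rw [Fin.le_def]; change (i:ℕ) ≤ (r:ℕ) - 1; omega)
          have := DFunLike.congr_fun e i
          change α (min i q) = α' (min i q) at this
          rwa [hiq] at this
        · rw [hyge α hα i hi, hyge α' hα' i hi]
      have hsup := support_act y τ hinj
      rw [hz, Finsupp.support_zero] at hsup
      have := Finset.mem_image_of_mem (fun α : Fin a →o Fin b => α.comp τ) hy1
      rw [← hsup] at this
      exact absurd this (Finset.notMem_empty _)

theorem Pos.eq_zero {a b : ℕ} {x : ZD a b} (hx : Pos x) (ha : 0 < a)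
    (hs : (x.sum fun _ c => c) = 0) : x = 0 :=
  Pos.eq_zero_aux b x hx hs (fun α _ i => (α i).isLt) ha

/-! ### The parts `x̌` and `x̄`, rank and level -/

theorem mem_checkPart {a n : ℕ} {x : ZD a (n+1)} {r : Fin a} {α : Fin a →o Fin (n+1)} :
    α ∈ (checkPart x r).support ↔ α ∈ x.support ∧ α r ≠ Fin.last n := by
  rw [checkPart, Finsupp.support_filter, Finset.mem_filter]

theorem mem_barPart {a n : ℕ} {x : ZD a (n+1)} {r : Fin a} {α : Fin a →o Fin (n+1)} :
    α ∈ (barPart x r).support ↔ α ∈ x.support ∧ α r = Fin.last n := by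
  rw [barPart, Finsupp.support_filter, Finset.mem_filter]

theorem checkPart_add_barPart {a n : ℕ} (x : ZD a (n+1)) (r : Fin a) :
    checkPart x r + barPart x r = x :=
  (add_comm _ _).trans (Finsupp.filter_add_filter_not x _)

theorem Pos.bar {a n : ℕ} {x : ZD a (n+1)} (hx : Pos x) {r : Fin a} (hr : isRank x r) :
    Pos (barPart x r) :=
  hx.top r (Fin.last n) (fun _ _ _ => Fin.le_last _)
    fun α hα _ hi e => absurd (hr.2 ⟨α, hα, e⟩) (not_le.2 hi)

/-- The operators in the support of `x̌` are constant on `[ℓ, r]`. -/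
theorem isLevel.eq_of_mem {a n : ℕ} {x : ZD a (n+1)} {r ℓ : Fin a} (hl : isLevel x r ℓ)
    {α : Fin a →o Fin (n+1)} (hα : α ∈ (checkPart x r).support) {i : Fin a} (h1 : ℓ ≤ i)
    (h2 : i ≤ r) : α i = α r :=
  le_antisymm (α.monotone h2) (hl.1 α hα ▸ α.monotone h1)

theorem isLevel.le {a n : ℕ} {x : ZD a (n+1)} {r ℓ : Fin a} (hl : isLevel x r ℓ) : ℓ ≤ r :=
  hl.2 fun _ _ => rfl

/-- Part of (O2) for `x̌`: the last vertex of `β` in `[ℓ, r]` may be moved to `r`, and then the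
condition `α r ≠ n` is decided by `γ`. -/
theorem Pos.checkPart_nonneg {a n p : ℕ} {x : ZD a (n+1)} (hx : Pos x) {r ℓ : Fin a}
    (hl : isLevel x r ℓ) (β : Fin (p+1) →o Fin a) (γ : Fin (p+1) →o Fin (n+1))
    (hβ : Function.Injective β) (hγ : Function.Injective γ)
    (hk : ∃ k, ℓ ≤ β k ∧ β k ≤ r) : 0 ≤ act (checkPart x r) β γ := by
  obtain ⟨k, hk1, hk2, hmax⟩ : ∃ k, ℓ ≤ β k ∧ β k ≤ r ∧ ∀ j, k < j → r < β j := by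
    obtain ⟨k₀, h1, h2⟩ := hk
    obtain ⟨k, hk, hm⟩ := WellFounded.has_min (wellFounded_gt (α := Fin (p+1)))
      {k | β k ≤ r} ⟨k₀, h2⟩
    refine ⟨k, h1.trans (β.monotone ?_), hk, fun j hj => not_le.1 fun h => hm j h hj⟩
    exact not_lt.1 fun h => hm k₀ h2 h
  have hval : ∀ α ∈ x.support, α r ≠ Fin.last n → α (β k) = α r := fun α hα h =>
    hl.eq_of_mem (mem_checkPart.2 ⟨hα, h⟩) hk1 hk2
  unfold checkPart
  by_cases h4 : γ k = Fin.last n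
  · refine (act_filter_eq_zero x _ β γ fun α hα e1 e => e1 ?_).ge
    rw [← hval α hα e1, ← h4, ← e]
    rfl
  · rw [act_filter_eq x _ β γ (replaceAt β k r
      (fun j hj => lt_of_lt_of_le (β.monotone.strictMono_of_injective hβ hj) hk2) hmax) γ]
    · exact hx.act_nonneg _ _ hγ
    · intro α hα
      constructor
      · rintro ⟨e1, rfl⟩
        ext j : 2
        rcases eq_or_ne j k with rfl | hj
        · simp [hval α hα e1]
        · simp [replaceAt_of_ne _ _ _ _ _ hj]
      · intro e
        have e0 : α r = γ k := by rw [← e]; simp 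
        have e1 : α r ≠ Fin.last n := e0 ▸ h4
        refine ⟨e1, ?_⟩
        ext j : 2
        rcases eq_or_ne j k with rfl | hj
        · exact (hval α hα e1).trans e0
        · rw [← e]; simp [replaceAt_of_ne _ _ _ _ _ hj]

/-- If the level were `0`, then `x̌` would satisfy all of (O2). -/
theorem Pos.checkPart_of_level_zero {a n : ℕ} {x : ZD a (n+1)} (hx : Pos x) {r ℓ : Fin a}
    (hl : isLevel x r ℓ) (h0 : (ℓ : ℕ) = 0) : Pos (checkPart x r) := by
  intro p β γ hβ hγ
  by_cases hk : ∃ k, ℓ ≤ β k ∧ β k ≤ r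
  · exact hx.checkPart_nonneg hl β γ hβ hγ hk
  have hgt : ∀ k, r < β k := fun k => by
    by_contra h
    exact hk ⟨k, by rw [Fin.le_def]; omega, not_lt.1 h⟩
  by_cases hγ0 : γ 0 = Fin.last n
  -- here `γ` is the single vertex `n`; sum over the value `c` of `α r`
  · have hlast : ∀ j, γ j = Fin.last n := fun j =>
      le_antisymm (Fin.le_last _) (hγ0 ▸ γ.monotone (Fin.zero_le j))
    have key : act (checkPart x r) β γ = ∑ c : Fin (n+1), if h : c < Fin.last n then
        act x (append (pt r) (β 0) (pt_lt (hgt 0))) (append (pt c) (Fin.last n) (pt_lt h))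
        else 0 := by
      have hterm : ∀ c : Fin (n+1), (if h : c < Fin.last n then
          act x (append (pt r) (β 0) (pt_lt (hgt 0))) (append (pt c) (Fin.last n) (pt_lt h))
          else 0) = ∑ α ∈ x.support, if α r = c then
            (if α r ≠ Fin.last n ∧ α.comp β = γ then x α else 0) else 0 := by
        intro c
        split_ifs with h
        · rw [act_apply]
          refine Finset.sum_congr rfl fun α _ => ?_
          rw [← ite_and]
          refine if_congr ?_ rfl rfl
          rw [comp_append_eq_iff, comp_pt_eq_iff]
          constructor
          · rintro ⟨e1, e2⟩
            refine ⟨e2, e2 ▸ h.ne, ?_⟩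
            ext j : 2
            rw [hlast j]
            exact le_antisymm (Fin.le_last _) (e1 ▸ α.monotone (β.monotone (Fin.zero_le j)))
          · rintro ⟨e1, -, e2⟩
            exact ⟨(DFunLike.congr_fun e2 0).trans hγ0, e1⟩
        · symm
          refine Finset.sum_eq_zero fun α _ => ?_
          have hc : c = Fin.last n := le_antisymm (Fin.le_last _) (not_lt.1 h)
          rw [← ite_and]
          exact if_neg fun e => e.2.1 (e.1.trans hc)
      rw [Finset.sum_congr rfl fun c _ => hterm c, Finset.sum_comm, checkPart, act_filter_apply]
      refine Finset.sum_congr rfl fun α _ => ?_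
      rw [Finset.sum_ite_eq Finset.univ (α r), if_pos (Finset.mem_univ _)]
    rw [key]
    refine Finset.sum_nonneg fun c _ => ?_
    split_ifs with h
    · exact hx _ _ _ (append_injective _ _ _ (pt_injective _))
        (append_injective _ _ _ (pt_injective _))
    · exact le_rfl
  · unfold checkPart
    rw [act_filter_eq x _ β γ β γ]
    · exact hx p β γ hβ hγ
    · refine fun α _ => ⟨fun h => h.2, fun h => ⟨fun e => hγ0 ?_, h⟩⟩
      rw [← h]
      exact le_antisymm (Fin.le_last _) (e ▸ α.monotone (hgt 0).le)

theorem npre_of_rank {a n : ℕ} {x : ZD a (n+1)} {r : Fin a} (hr : isRank x r)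
    {α : Fin a →o Fin (n+1)} (hα : α ∈ x.support) (h : α r = Fin.last n) :
    npre α = (Finset.univ.filter fun i => r ≤ i).card := by
  unfold npre
  congr 1
  ext i
  simp only [Finset.mem_filter, Finset.mem_univ, true_and]
  exact ⟨fun e => hr.2 ⟨α, hα, e⟩,
    fun hi => le_antisymm (Fin.le_last _) (h ▸ α.monotone hi)⟩

theorem npre_lt_of_rank {a n : ℕ} {x : ZD a (n+1)} {r : Fin a} (hr : isRank x r)
    {α : Fin a →o Fin (n+1)} (hα : α ∈ x.support) (h : α r ≠ Fin.last n) :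
    npre α < (Finset.univ.filter fun i => r ≤ i).card := by
  unfold npre
  refine Finset.card_lt_card (Finset.ssubset_iff_of_subset ?_ |>.2 ⟨r, by simp, by simpa using h⟩)
  intro i hi
  simp only [Finset.mem_filter, Finset.mem_univ, true_and] at hi ⊢
  exact hr.2 ⟨α, hα, hi⟩

theorem exists_mem_checkPart {a n : ℕ} {x : ZD a (n+1)} {r : Fin a} (hr : isRank x r)
    (hA : ¬ inA x) : ∃ α, α ∈ (checkPart x r).support := by
  by_contra h
  push Not at h
  have hall : ∀ α ∈ x.support, α r = Fin.last n := fun α hα => by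
    by_contra e
    exact h α (mem_checkPart.2 ⟨hα, e⟩)
  exact hA fun α hα β hβ => by
    rw [npre_of_rank hr hα (hall α hα), npre_of_rank hr hβ (hall β hβ)]

/-- The level of an element outside `A` is at least `1`: otherwise `x̌` and `x̄` both satisfy (O2),
and the one with coefficient sum zero vanishes. -/
theorem level_pos {a n : ℕ} {x : ZD a (n+1)} (hx : memO x) (hA : ¬ inA x) {r ℓ : Fin a}
    (hr : isRank x r) (hl : isLevel x r ℓ) : 0 < (ℓ : ℕ) := by
  by_contra h0
  have h0 : (ℓ : ℕ) = 0 := by omega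
  have ha : 0 < a := r.pos
  have hpos : Pos x := hx.2
  obtain ⟨α₁, hα₁, hr₁⟩ := hr.1
  obtain ⟨α₂, hα₂⟩ := exists_mem_checkPart hr hA
  have hbar : ((barPart x r).sum fun _ c => c) = act x (pt r) (pt (Fin.last n)) :=
    sum_filter_eq_act x _ _ _ fun α _ => (comp_pt_eq_iff α r _).symm
  have hadd : ((checkPart x r).sum fun _ c => c) + ((barPart x r).sum fun _ c => c) = 1 := by
    rw [← hx.1]
    conv_rhs => rw [← checkPart_add_barPart x r]
    exact (Finsupp.sum_add_index' (fun _ => rfl) (fun _ _ _ => rfl)).symm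
  have hge : 0 ≤ act x (pt r) (pt (Fin.last n)) :=
    hpos 0 _ _ (pt_injective _) (pt_injective _)
  have hle := hpos.vertex_le_sum r (Fin.last n)
  rw [hx.1] at hle
  rcases (by omega : act x (pt r) (pt (Fin.last n)) = 0 ∨ act x (pt r) (pt (Fin.last n)) = 1)
    with h | h
  · have := (hpos.bar hr).eq_zero ha (by rw [hbar, h])
    have hm : α₁ ∈ (barPart x r).support := mem_barPart.2 ⟨hα₁, hr₁⟩
    rw [this] at hm
    simp at hm
  · have := (hpos.checkPart_of_level_zero hl h0).eq_zero ha (by omega)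
    rw [this] at hα₂
    simp at hα₂

/-- Claim (parent): if `x` does not satisfy (†), then `w = x̌σℓ + x̄σ(ℓ-1)` is a
nondegenerate element of `O(m+1,n) \ A` with rank `r+1` and level `ℓ`, satisfying
(†), with `w ∂ℓ = x` and `supp w = supp(x̌)σℓ ∪ supp(x̄)σ(ℓ-1)`. -/
theorem stmt16 (m n : ℕ) (x : ZD (m+1) (n+1)) (hx : memO x) (hnd : ¬ isDegen x)
    (hA : ¬ inA x) (r ℓ : Fin (m+1)) (hr : isRank x r) (hl : isLevel x r ℓ)
    (hdag : ¬ dagger x r ℓ) :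
    memO (parent x r ℓ) ∧ ¬ isDegen (parent x r ℓ) ∧ ¬ inA (parent x r ℓ) ∧
    isRank (parent x r ℓ) ⟨(r:ℕ)+1, by have := r.isLt; omega⟩ ∧
    isLevel (parent x r ℓ) ⟨(r:ℕ)+1, by have := r.isLt; omega⟩
      ⟨(ℓ:ℕ), by have := ℓ.isLt; omega⟩ ∧
    dagger (parent x r ℓ) ⟨(r:ℕ)+1, by have := r.isLt; omega⟩
      ⟨(ℓ:ℕ), by have := ℓ.isLt; omega⟩ ∧
    act (parent x r ℓ) (face ⟨(ℓ:ℕ), by have := ℓ.isLt; omega⟩) = x ∧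
    ↑(parent x r ℓ).support
      = (fun α : Fin (m+1) →o Fin (n+1) => α.comp (degen ℓ)) '' ↑(checkPart x r).support
        ∪ (fun α : Fin (m+1) →o Fin (n+1) =>
            α.comp (degen ⟨(ℓ:ℕ)-1, by have := ℓ.isLt; omega⟩)) '' ↑(barPart x r).support := by
  have hl0 : 0 < (ℓ : ℕ) := level_pos hx hA hr hl
  have hlr : (ℓ : ℕ) ≤ r := hl.le
  have hpos : Pos x := hx.2
  set q : Fin (m+1) := ⟨(ℓ:ℕ)-1, by have := ℓ.isLt; omega⟩ with hq
  have hqv : (q : ℕ) = ℓ - 1 := rfl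
  set R : Fin (m+2) := ⟨(r:ℕ)+1, by have := r.isLt; omega⟩ with hR
  have hRv : (R : ℕ) = r + 1 := rfl
  have hL : (⟨(ℓ:ℕ), by have := ℓ.isLt; omega⟩ : Fin (m+2)) = ℓ.castSucc := rfl
  rw [hL]
  have hw : parent x r ℓ = act (checkPart x r) (degen ℓ) + act (barPart x r) (degen q) := rfl
  generalize parent x r ℓ = w at hw ⊢
  have hR1 : degen ℓ R = r := by
    ext; rw [degen_val, hRv]; split_ifs <;> omega
  have hR2 : degen q R = r := by
    ext; rw [degen_val, hRv, hqv]; split_ifs <;> omega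
  have hs1 := support_act (checkPart x r) (degen ℓ) (comp_degen_injective ℓ).injOn
  have hs2 := support_act (barPart x r) (degen q) (comp_degen_injective q).injOn
  -- the two parts of `w` are separated by the value at `r + 1`
  have hdisj : Disjoint (act (checkPart x r) (degen ℓ)).support
      (act (barPart x r) (degen q)).support := by
    rw [Finset.disjoint_left]
    intro δ h1 h2
    obtain ⟨α, hα, rfl⟩ := exists_of_mem_support_act h1
    obtain ⟨α', hα', e⟩ := exists_of_mem_support_act h2
    have e' : α' (degen q R) = α (degen ℓ R) := DFunLike.congr_fun e R
    rw [hR1, hR2, (mem_barPart.1 hα').2] at e'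
    exact (mem_checkPart.1 hα).2 e'.symm
  have hsupp : w.support = (checkPart x r).support.image (fun α => α.comp (degen ℓ))
      ∪ (barPart x r).support.image (fun α => α.comp (degen q)) := by
    rw [hw, Finsupp.support_add_eq hdisj, hs1, hs2]
  have hm1 : ∀ α ∈ (checkPart x r).support, α.comp (degen ℓ) ∈ w.support := fun α hα => by
    rw [hsupp]
    exact Finset.mem_union_left _ (Finset.mem_image_of_mem _ hα)
  have hm2 : ∀ α ∈ (barPart x r).support, α.comp (degen q) ∈ w.support := fun α hα => by
    rw [hsupp]
    exact Finset.mem_union_right _ (Finset.mem_image_of_mem _ hα)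
  have hcases : ∀ δ ∈ w.support, (∃ α ∈ (checkPart x r).support, α.comp (degen ℓ) = δ) ∨
      ∃ α ∈ (barPart x r).support, α.comp (degen q) = δ := fun δ hδ => by
    rw [hsupp] at hδ
    simpa only [Finset.mem_union, Finset.mem_image] using hδ
  have hwcheck : ∀ δ, δ ∈ (checkPart w R).support ↔
      ∃ α ∈ (checkPart x r).support, α.comp (degen ℓ) = δ := by
    intro δ
    rw [mem_checkPart]
    constructor
    · rintro ⟨h1, h2⟩
      refine (hcases δ h1).resolve_right ?_
      rintro ⟨α, hα, rfl⟩
      refine h2 ?_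
      change α (degen q R) = _
      rw [hR2]
      exact (mem_barPart.1 hα).2
    · rintro ⟨α, hα, rfl⟩
      refine ⟨hm1 α hα, ?_⟩
      change α (degen ℓ R) ≠ _
      rw [hR1]
      exact (mem_checkPart.1 hα).2
  have hwbar : ∀ δ, δ ∈ (barPart w R).support ↔
      ∃ α ∈ (barPart x r).support, α.comp (degen q) = δ := by
    intro δ
    rw [mem_barPart]
    constructor
    · rintro ⟨h1, h2⟩
      refine (hcases δ h1).resolve_left ?_
      rintro ⟨α, hα, rfl⟩
      change α (degen ℓ R) = _ at h2
      rw [hR1] at h2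
      exact (mem_checkPart.1 hα).2 h2
    · rintro ⟨α, hα, rfl⟩
      refine ⟨hm2 α hα, ?_⟩
      change α (degen q R) = _
      rw [hR2]
      exact (mem_barPart.1 hα).2
  obtain ⟨α₁, hα₁, hr₁⟩ := hr.1
  have hα₁ : α₁ ∈ (barPart x r).support := mem_barPart.2 ⟨hα₁, hr₁⟩
  obtain ⟨α₂, hα₂⟩ := exists_mem_checkPart hr hA
  have hface : act w (face ℓ.castSucc) = x := by
    rw [hw, act_add, act_act, act_act, act_eq_self, act_eq_self, checkPart_add_barPart]
    · intro α _
      ext j : 2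
      change α (degen q (face _ j)) = α j
      congr 1
      ext
      rw [degen_val, face_val, hqv, Fin.val_castSucc]
      split_ifs <;> omega
    · intro α _
      ext j : 2
      change α (degen ℓ (face _ j)) = α j
      rw [degen_face_self]
  have hrank : isRank w R := by
    constructor
    · refine ⟨_, hm2 α₁ hα₁, ?_⟩
      change α₁ (degen q R) = _
      rw [hR2, hr₁]
    · rintro i ⟨δ, hδ, hi⟩
      rcases hcases δ hδ with ⟨α, hα, rfl⟩ | ⟨α, hα, rfl⟩
      · by_contra hlt
        refine (mem_checkPart.1 hα).2 (le_antisymm (Fin.le_last _) ?_)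
        rw [← hi, ← hR1]
        exact α.monotone ((degen ℓ).monotone (not_le.1 hlt).le)
      · have h1 : r ≤ degen q i := hr.2 ⟨α, (mem_barPart.1 hα).1, hi⟩
        rw [Fin.le_def, degen_val, hqv] at h1
        rw [Fin.le_def, hRv]
        split_ifs at h1 <;> omega
  refine ⟨⟨?_, ?_⟩, ?_, ?_, hrank, ?_, ?_, hface, ?_⟩
  · rw [← sum_act w (face ℓ.castSucc), hface]
    exact hx.1
  · intro p β γ hβ hγ
    by_cases hhit : ∃ k, β k = ℓ.castSucc
    · obtain ⟨k, hk⟩ := hhit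
      rw [hw, act_add, act_act, act_act, Finsupp.add_apply]
      refine add_nonneg ?_ ((hpos.bar hr).act_nonneg _ _ hγ)
      by_cases hinj : Function.Injective ((degen ℓ).comp β)
      · refine hpos.checkPart_nonneg hl _ γ hinj hγ ⟨k, ?_⟩
        have : ((degen ℓ).comp β) k = ℓ := by
          change degen ℓ (β k) = ℓ
          rw [hk]
          ext
          simp [degen_val]
        rw [this]
        exact ⟨le_rfl, hl.le⟩
      · exact (act_eq_zero_of_not_injective _ _ _ hinj hγ).ge
    -- `β` factors through the face `∂_ℓ`, along which `w` restricts to `x`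
    · push Not at hhit
      have : β = (face ℓ.castSucc).comp ((degen ℓ).comp β) := by
        ext k
        change (β k : ℕ) = face _ (degen _ (β k))
        have := Fin.val_ne_of_ne (hhit k)
        rw [Fin.val_castSucc] at this
        rw [face_val, degen_val, Fin.val_castSucc]
        split_ifs <;> omega
      rw [this, ← act_act, hface]
      exact hpos.act_nonneg _ _ hγ
  · rintro ⟨k, hk⟩
    obtain ⟨hk1, hk2⟩ := (isDegenAt_iff w k).1 hk
    have hc : ∀ α ∈ (checkPart x r).support,
        α (degen ℓ ⟨k, by omega⟩) = α (degen ℓ ⟨k+1, hk1⟩) := fun α hα => hk2 _ (hm1 α hα)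
    have hb : ∀ α ∈ (barPart x r).support,
        α (degen q ⟨k, by omega⟩) = α (degen q ⟨k+1, hk1⟩) := fun α hα => hk2 _ (hm2 α hα)
    rcases eq_or_ne k ℓ with hkl | hkl
    · refine hdag ((isDegenAt_iff _ _).2 ⟨by omega, fun α hα => ?_⟩)
      convert hb α hα using 2 <;> ext <;> rw [degen_val, hqv] <;> simp only <;>
        split_ifs <;> omega
    rcases eq_or_ne (k+1) ℓ with hkl' | hkl'
    · have h1 : ℓ ≤ (⟨k, by omega⟩ : Fin (m+1)) := by
        refine hl.2 fun α hα => ?_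
        rw [← hl.1 α hα]
        convert hc α hα using 2 <;> ext <;> rw [degen_val] <;> simp only <;>
          split_ifs <;> omega
      rw [Fin.le_def] at h1
      simp only at h1
      omega
    -- away from `ℓ - 1` and `ℓ` a degeneracy of `w` comes from one of `x`
    have hsplit : ∀ α ∈ x.support, α ∈ (checkPart x r).support ∨ α ∈ (barPart x r).support :=
      fun α hα => by
        rw [mem_checkPart, mem_barPart]
        tauto
    rcases lt_or_gt_of_ne hkl with hlt | hgt
    · refine hnd ⟨k, (isDegenAt_iff _ _).2 ⟨by omega, fun α hα => ?_⟩⟩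
      rcases hsplit α hα with h | h
      · convert hc α h using 2 <;> ext <;> rw [degen_val] <;> simp only <;>
          split_ifs <;> omega
      · convert hb α h using 2 <;> ext <;> rw [degen_val, hqv] <;> simp only <;>
          split_ifs <;> omega
    · refine hnd ⟨k-1, (isDegenAt_iff _ _).2 ⟨by omega, fun α hα => ?_⟩⟩
      rcases hsplit α hα with h | h
      · convert hc α h using 2 <;> ext <;> rw [degen_val] <;> simp only <;>
          split_ifs <;> omega
      · convert hb α h using 2 <;> ext <;> rw [degen_val, hqv] <;> simp only <;>
          split_ifs <;> omega
  · intro h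
    have h1 := mem_barPart.1 ((hwbar _).2 ⟨α₁, hα₁, rfl⟩)
    have h2 := mem_checkPart.1 ((hwcheck _).2 ⟨α₂, hα₂, rfl⟩)
    have h3 := npre_of_rank hrank h1.1 h1.2
    have h4 := npre_lt_of_rank hrank h2.1 h2.2
    have h5 := h _ h1.1 _ h2.1
    omega
  · constructor
    · intro δ hδ
      obtain ⟨α, hα, rfl⟩ := (hwcheck δ).1 hδ
      change α (degen ℓ _) = α (degen ℓ R)
      rw [hR1, ← hl.1 α hα]
      congr 1
      ext
      simp [degen_val]
    · intro i hi
      by_contra hlt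
      rw [Fin.le_def, Fin.val_castSucc] at hlt
      have h1 : ℓ ≤ (⟨i, by omega⟩ : Fin (m+1)) := by
        refine hl.2 fun α hα => ?_
        have h2 : α (degen ℓ i) = α (degen ℓ R) := hi _ ((hwcheck _).2 ⟨α, hα, rfl⟩)
        rw [hR1] at h2
        rw [← h2]
        congr 1
        ext
        rw [degen_val, if_pos (by omega)]
      exact hlt h1
  · refine (isDegenAt_iff _ _).2 ⟨by rw [Fin.val_castSucc]; omega, fun δ hδ => ?_⟩
    obtain ⟨α, -, rfl⟩ := (hwbar δ).1 hδ
    change α (degen q _) = α (degen q _)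
    congr 1
    ext
    simp [degen_val, hqv]
  · rw [hsupp, Finset.coe_union, Finset.coe_image, Finset.coe_image]
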